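/- Let A be an m×m real matrix and b, d ∈ ℝ^m with b·1_m = 1, b·d = 1/2 and b·(A·d) = 1/6; let c_1, …, c_{s+1} be reals with c_1 = 0, Δc_i := c_{i+1} − c_i; and let β ∈ ℝ^s satisfy Σ_{ℓ=1}^{s} β_ℓ c_ℓ³ = 1/4. Then Σ_{i=1}^{s} Δc_i·( Σ_{ℓ=i+1}^{s} β_ℓ )·( b·( (1/2)c_i²·1_m + c_iΔc_i·d + Δc_i²·A·d ) ) = 1/24. (This shows the MR-GARK fourth-order coupling condition b^{s T} A^{sf} A^{ff} c^{ff} = 1/24 is automatically satisfied for MRI-GARK schemes.) -/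

import Mathlib

theorem tele_aux {s : ℕ} (f : Fin (s + 1) → ℝ) (k : Fin (s + 1)) :
    ∑ i : Fin s, (if i.castSucc < k then f i.succ - f i.castSucc else 0) = f k - f 0 := by
  induction k using Fin.induction with
  | zero => simp
  | succ j ih =>
    have h : ∀ i : Fin s, (if i.castSucc < j.succ then f i.succ - f i.castSucc else 0)
        = (if i.castSucc < j.castSucc then f i.succ - f i.castSucc else 0)
          + (if i = j then f i.succ - f i.castSucc else 0) := by
      intro i
      rcases lt_trichotomy i j with h | h | h
      · have h1 : i.castSucc < j.succ := by simp only [Fin.lt_def, Fin.val_castSucc, Fin.val_succ] at *; omega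
        have h2 : i.castSucc < j.castSucc := h
        simp [h1, h2, h.ne]
      · subst h
        simp
      · have h1 : ¬ i.castSucc < j.succ := by simp only [Fin.lt_def, Fin.val_castSucc, Fin.val_succ] at *; omega
        have h2 : ¬ i.castSucc < j.castSucc := by simp only [Fin.lt_def, Fin.val_castSucc] at *; omega
        simp [h1, h2, h.ne']
    rw [Finset.sum_congr rfl (fun i _ => h i), Finset.sum_add_distrib, ih]
    simp

/-- Fourth-order MR-GARK coupling condition `b^{sT} A^{sf} A^{ff} c^{ff} = 1/24`
holds automatically for MRI-GARK schemes: with `b·1 = 1`, `b·d = 1/2`,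
`b·(A·d) = 1/6`, `c_1 = 0`, `Δc_i = c_{i+1} − c_i`, and slow weights `β` with
`Σ_ℓ β_ℓ c_ℓ³ = 1/4`, one has
`Σ_i Δc_i (Σ_{ℓ=i+1}^{s} β_ℓ)(b·((1/2)c_i²·1 + c_iΔc_i·d + Δc_i²·A·d)) = 1/24`. -/
theorem stmt13 {m s : ℕ} (A : Matrix (Fin m) (Fin m) ℝ) (b d : Fin m → ℝ)
    (hb1 : ∑ ℓ, b ℓ = 1) (hbd : ∑ ℓ, b ℓ * d ℓ = 1 / 2)
    (hbAd : ∑ ℓ, b ℓ * (∑ r, A ℓ r * d r) = 1 / 6)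
    (c : Fin (s + 1) → ℝ) (hc0 : c 0 = 0)
    (Δc : Fin s → ℝ) (hΔc : ∀ i, Δc i = c i.succ - c i.castSucc)
    (β : Fin s → ℝ) (hβ : ∑ ℓ : Fin s, β ℓ * (c ℓ.castSucc) ^ 3 = 1 / 4) :
    ∑ i : Fin s, Δc i * (∑ ℓ ∈ Finset.univ.filter (fun ℓ : Fin s => i < ℓ), β ℓ)
        * (∑ r, b r * ((1 / 2) * (c i.castSucc) ^ 2 + c i.castSucc * Δc i * d r
            + (Δc i) ^ 2 * ∑ r', A r r' * d r')) = 1 / 24 := by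
  have hin : ∀ i : Fin s, (∑ r, b r * ((1 / 2) * (c i.castSucc) ^ 2 + c i.castSucc * Δc i * d r
            + (Δc i) ^ 2 * ∑ r', A r r' * d r'))
      = (1 / 2) * (c i.castSucc) ^ 2 * 1 + c i.castSucc * Δc i * (1 / 2)
        + (Δc i) ^ 2 * (1 / 6) := by
    intro i
    have e1 := congrArg (fun x => (1 / 2) * (c i.castSucc) ^ 2 * x) hb1
    have e2 := congrArg (fun x => c i.castSucc * Δc i * x) hbd
    have e3 := congrArg (fun x => (Δc i) ^ 2 * x) hbAd
    beta_reduce at e1 e2 e3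
    rw [← e1, ← e2, ← e3, Finset.mul_sum, Finset.mul_sum, Finset.mul_sum,
      ← Finset.sum_add_distrib, ← Finset.sum_add_distrib]
    refine Finset.sum_congr rfl (fun r _ => ?_)
    ring
  have hterm : ∀ i : Fin s, Δc i * (∑ ℓ ∈ Finset.univ.filter (fun ℓ : Fin s => i < ℓ), β ℓ)
        * (∑ r, b r * ((1 / 2) * (c i.castSucc) ^ 2 + c i.castSucc * Δc i * d r
            + (Δc i) ^ 2 * ∑ r', A r r' * d r'))
      = ∑ ℓ : Fin s, (1 / 6) * (β ℓ * (if i.castSucc < ℓ.castSucc then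
          c i.succ ^ 3 - c i.castSucc ^ 3 else 0)) := by
    intro i
    rw [hin i, hΔc i, Finset.sum_filter, Finset.mul_sum, Finset.sum_mul]
    refine Finset.sum_congr rfl (fun ℓ _ => ?_)
    simp only [Fin.castSucc_lt_castSucc_iff]
    split_ifs <;> ring
  rw [Finset.sum_congr rfl (fun i _ => hterm i), Finset.sum_comm]
  have h2 : ∀ ℓ : Fin s, ∑ i : Fin s, (1 / 6) * (β ℓ * (if i.castSucc < ℓ.castSucc then
          c i.succ ^ 3 - c i.castSucc ^ 3 else 0)) = (1 / 6) * (β ℓ * c ℓ.castSucc ^ 3) := by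
    intro ℓ
    rw [← Finset.mul_sum, ← Finset.mul_sum, tele_aux (fun k => c k ^ 3) ℓ.castSucc, hc0]
    ring
  rw [Finset.sum_congr rfl (fun i _ => h2 i), ← Finset.mul_sum, hβ]
  norm_num
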